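/- An annular continuum C ⊆ 𝔸 is a circloid if and only if (𝒰(C), ℒ(C)) is a reflexive pair of hemispheres, i.e. 𝒰(ℒ(C)) = 𝒰(C) and ℒ(𝒰(C)) = ℒ(C). -/

import Mathlib

open Filter Topology

local notation "⟪" x ", " y "⟫" => @inner ℝ _ _ x y

noncomputable section

/-- The open annulus `𝔸 = 𝕋¹ × ℝ`. -/
abbrev Ann := AddCircle (1 : ℝ) × ℝ

/-- `S ⊆ 𝔸` is unbounded from above in the `ℝ`-coordinate. -/
def UnbAbove (S : Set Ann) : Prop := ¬ BddAbove (Prod.snd '' S)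

/-- `S ⊆ 𝔸` is unbounded from below in the `ℝ`-coordinate. -/
def UnbBelow (S : Set Ann) : Prop := ¬ BddBelow (Prod.snd '' S)

/-- `S ⊆ 𝔸` is bounded (equivalently, bounded in the `ℝ`-coordinate). -/
def BoundedA (S : Set Ann) : Prop := BddAbove (Prod.snd '' S) ∧ BddBelow (Prod.snd '' S)

/-- `E ⊆ 𝔸` is essential: no connected component of its complement is unbounded both
above and below. -/
def EssentialA (E : Set Ann) : Prop :=
  ∀ x ∈ Eᶜ, ¬ (UnbAbove (connectedComponentIn Eᶜ x) ∧ UnbBelow (connectedComponentIn Eᶜ x))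

/-- An annular continuum: a compact connected set whose complement has exactly two
connected components, both unbounded. -/
def IsAnnularContinuum (E : Set Ann) : Prop :=
  IsCompact E ∧ IsConnected E ∧
  (∀ x ∈ Eᶜ, ¬ BoundedA (connectedComponentIn Eᶜ x)) ∧
  ∃ x y, x ∈ Eᶜ ∧ y ∈ Eᶜ ∧ connectedComponentIn Eᶜ x ≠ connectedComponentIn Eᶜ y ∧
    ∀ z ∈ Eᶜ, connectedComponentIn Eᶜ z = connectedComponentIn Eᶜ x ∨
      connectedComponentIn Eᶜ z = connectedComponentIn Eᶜ y

/-- A circloid: an annular continuum containing no strictly smaller annular continuum. -/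
def IsCircloidA (C : Set Ann) : Prop :=
  IsAnnularContinuum C ∧ ∀ E ⊆ C, IsAnnularContinuum E → E = C

/-- `ℒ(U)`: the connected component of `𝔸 \ cl(U)` unbounded from below (for a
generating set it is unique; in general we take the union of all components of
`𝔸 \ cl(U)` unbounded from below). -/
def lowerComp (U : Set Ann) : Set Ann :=
  {z | z ∈ (closure U)ᶜ ∧ UnbBelow (connectedComponentIn (closure U)ᶜ z)}

/-- `𝒰(L)`: the connected component of `𝔸 \ cl(L)` unbounded from above. -/
def upperComp (L : Set Ann) : Set Ann :=
  {z | z ∈ (closure L)ᶜ ∧ UnbAbove (connectedComponentIn (closure L)ᶜ z)}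

/-- An upper generating set: bounded from below with essential closure. -/
def UpperGen (U : Set Ann) : Prop := BddBelow (Prod.snd '' U) ∧ EssentialA (closure U)

/-- A lower generating set: bounded from above with essential closure. -/
def LowerGen (L : Set Ann) : Prop := BddAbove (Prod.snd '' L) ∧ EssentialA (closure L)

/-- `𝒞⁻(U) = 𝔸 \ (𝒰ℒ(U) ∪ ℒ𝒰ℒ(U))`. -/
def Cminus (U : Set Ann) : Set Ann :=
  (upperComp (lowerComp U) ∪ lowerComp (upperComp (lowerComp U)))ᶜ

/-- `𝒞⁺(L) = 𝔸 \ (ℒ𝒰(L) ∪ 𝒰ℒ𝒰(L))`. -/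
def Cplus (L : Set Ann) : Set Ann :=
  (lowerComp (upperComp L) ∪ upperComp (lowerComp (upperComp L)))ᶜ

instance instLCCirc : LocallyConnectedSpace (AddCircle (1 : ℝ)) :=
  (QuotientAddGroup.isOpenQuotientMap_mk (N := AddSubgroup.zmultiples (1 : ℝ))
    ).isQuotientMap.isCoinducing.locallyConnectedSpace

instance instLCAnn : LocallyConnectedSpace Ann := by infer_instance

lemma int_const {Z : Type*} [TopologicalSpace Z] {S : Set Z} (hS : IsPreconnected S) {g : Z → ℝ}
    (hg : ContinuousOn g S) (hi : ∀ x ∈ S, ((g x : ℝ) : AddCircle (1 : ℝ)) = 0) {x y : Z} (hx : x ∈ S)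
    (hy : y ∈ S) : g x = g y := by
  have hd : DiscreteTopology (Set.range ((↑) : ℤ → ℝ)) :=
    (Int.isClosedEmbedding_coe_real.isEmbedding.toHomeomorph.symm.isEmbedding).discreteTopology
  refine hS.constant_of_mapsTo (T := Set.range ((↑) : ℤ → ℝ)) ⟨hd⟩ hg ?_ hx hy
  intro z hz
  obtain ⟨n, hn⟩ := (AddCircle.coe_eq_zero_iff (1 : ℝ)).1 (hi z hz)
  exact ⟨n, by simpa using hn⟩

lemma unico {X Y : Set Ann} (hX : IsClosed X) (hY : IsClosed Y) (hXc : IsPreconnected X)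
    (hYc : IsPreconnected Y) (hXY : X ∪ Y = Set.univ) (m : ℝ)
    (hm : ∀ p : Ann, p.2 = m → p ∉ X ∩ Y) : IsPreconnected (X ∩ Y) := by
  rw [isPreconnected_iff_subset_of_fully_disjoint_closed (hX.inter hY)]
  intro u v hu hv huv hd
  by_contra hcon
  push Not at hcon
  obtain ⟨h1, h2⟩ := hcon
  obtain ⟨b, hb, hbu⟩ := Set.not_subset.1 h1
  obtain ⟨a, ha, hav⟩ := Set.not_subset.1 h2
  have hau : a ∈ u := (huv ha).resolve_right hav
  have hbv : b ∈ v := (huv hb).resolve_left hbu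
  have hline : IsClosed {p : Ann | p.2 = m} := isClosed_eq continuous_snd continuous_const
  obtain ⟨w, hw0, hw1, -⟩ := exists_continuous_zero_one_of_isClosed
    (s := (X ∩ Y ∩ u) ∪ {p : Ann | p.2 = m}) (t := X ∩ Y ∩ v)
    (((hX.inter hY).inter hu).union hline) ((hX.inter hY).inter hv) (by
      rw [Set.disjoint_left]
      rintro p (hp | hp) hq
      · exact Set.disjoint_left.1 hd hp.2 hq.2
      · exact hm p hp hq.1)
  classical
  let f : Ann → AddCircle (1 : ℝ) := fun p =>
    if p ∈ X then ((w p / 2 : ℝ) : AddCircle (1 : ℝ)) else ((-(w p) / 2 : ℝ) : AddCircle (1 : ℝ))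
  have hagree : ∀ p ∈ X ∩ Y, ((w p / 2 : ℝ) : AddCircle (1 : ℝ)) =
      ((-(w p) / 2 : ℝ) : AddCircle (1 : ℝ)) := by
    intro p hp
    rcases huv hp with h | h
    · have : w p = 0 := hw0 (Or.inl ⟨hp, h⟩)
      simp [this]
    · have : w p = 1 := hw1 ⟨hp, h⟩
      rw [this, ← sub_eq_zero, ← AddCircle.coe_sub, AddCircle.coe_eq_zero_iff]
      exact ⟨1, by norm_num⟩
  have hcoe : Continuous (fun r : ℝ => (r : AddCircle (1 : ℝ))) := AddCircle.continuous_mk' 1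
  have hfc : Continuous f := by
    refine Continuous.if ?_ ?_ ?_
    · intro p hp
      refine hagree p ⟨?_, ?_⟩
      · exact hX.frontier_subset hp
      · have h3 : p ∈ closure Xᶜ := by
          rw [frontier_eq_closure_inter_closure] at hp
          exact hp.2
        refine closure_minimal ?_ hY h3
        intro q hq
        have : q ∈ X ∪ Y := by rw [hXY]; trivial
        exact this.resolve_left hq
    · exact hcoe.comp (by fun_prop)
    · exact hcoe.comp (by fun_prop)
  have hfX : ∀ p ∈ X, f p = ((w p / 2 : ℝ) : AddCircle (1 : ℝ)) := fun p hp => if_pos hp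
  have hfY : ∀ p ∈ Y, f p = ((-(w p) / 2 : ℝ) : AddCircle (1 : ℝ)) := by
    intro p hp
    by_cases hpX : p ∈ X
    · rw [hfX p hpX, hagree p ⟨hpX, hp⟩]
    · exact if_neg hpX
  have hfl : ∀ p : Ann, p.2 = m → f p = 0 := by
    intro p hp
    have : w p = 0 := hw0 (Or.inr hp)
    simp [f, this]
  -- lift
  let π : ℝ × ℝ → Ann := Prod.map (fun r : ℝ => (r : AddCircle (1 : ℝ))) id
  have hπ : IsOpenQuotientMap π :=
    IsOpenQuotientMap.prodMap QuotientAddGroup.isOpenQuotientMap_mk IsOpenQuotientMap.id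
  have hπc : Continuous π := hπ.continuous
  obtain ⟨F, ⟨-, hF⟩, -⟩ := (AddCircle.isCoveringMap_coe (1 : ℝ)).existsUnique_continuousMap_lifts
    (⟨fun z => f (π z), hfc.comp hπc⟩ : C(ℝ × ℝ, AddCircle (1 : ℝ))) ((0 : ℝ), m) (0 : ℝ)
    (by simpa using (hfl (π (0, m)) rfl).symm)
  have hF' : ∀ z, ((F z : ℝ) : AddCircle (1 : ℝ)) = f (π z) := fun z => congrFun hF z
  have hπper : ∀ x y : ℝ, π (x + 1, y) = π (x, y) := by
    intro x y
    simp [π]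
  have hper : ∀ x y : ℝ, F (x + 1, y) = F (x, y) := by
    intro x y
    have e1 : F ((x : ℝ) + 1, y) - F (x, y) = F ((0 : ℝ) + 1, m) - F (0, m) := by
      refine int_const (Z := ℝ × ℝ) (S := Set.univ) isPreconnected_univ
        (g := fun z => F (z.1 + 1, z.2) - F z) (by fun_prop) ?_ (x := (x, y)) (y := (0, m))
        trivial trivial
      rintro ⟨x, y⟩ -
      rw [AddCircle.coe_sub, hF', hF', hπper, sub_self]
    have e2 : F ((0 : ℝ) + 1, m) = F (0, m) := by
      refine int_const (Z := ℝ) (S := Set.univ) isPreconnected_univ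
        (g := fun t => F (t, m)) (by fun_prop) ?_ (x := 0 + 1) (y := 0) trivial trivial
      intro t _
      rw [hF']
      exact hfl _ rfl
    rw [e2, sub_self] at e1
    linarith
  let G : Ann → ℝ := fun p => Function.Periodic.lift (f := fun x => F (x, p.2)) (c := (1 : ℝ))
    (fun x => hper x p.2) p.1
  have hG : ∀ z, G (π z) = F z := by
    rintro ⟨x, y⟩
    rfl
  have hGc : Continuous G := by
    rw [hπ.isQuotientMap.continuous_iff]
    have : G ∘ π = F := funext hG
    rw [this]
    exact F.continuous
  have hGf : ∀ p, ((G p : ℝ) : AddCircle (1 : ℝ)) = f p := by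
    intro p
    obtain ⟨z, rfl⟩ := hπ.surjective p
    rw [hG, hF']
  have k1 : G a - w a / 2 = G b - w b / 2 :=
    int_const hXc (g := fun p => G p - w p / 2) (by fun_prop)
      (fun p hp => by rw [AddCircle.coe_sub, hGf, hfX p hp, sub_self]) ha.1 hb.1
  have k2 : G a - (-(w a)) / 2 = G b - (-(w b)) / 2 :=
    int_const hYc (g := fun p => G p - (-(w p)) / 2) (by fun_prop)
      (fun p hp => by rw [AddCircle.coe_sub, hGf, hfY p hp, sub_self]) ha.2 hb.2
  have wa : w a = 0 := hw0 (Or.inl ⟨ha, hau⟩)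
  have wb : w b = 1 := hw1 ⟨hb, hbv⟩
  rw [wa, wb] at k1 k2
  linarith

/-- Complement of a component of the complement of a connected set is connected. -/
lemma compl_conn {Z : Type*} [TopologicalSpace Z] [LocallyConnectedSpace Z] [PreconnectedSpace Z]
    {K : Set Z} (hK : IsClosed K) (hc : IsConnected K) (v : Z) :
    IsPreconnected (connectedComponentIn Kᶜ v)ᶜ := by
  obtain ⟨k, hk⟩ := hc.nonempty
  have hkV : k ∈ (connectedComponentIn Kᶜ v)ᶜ := fun h => connectedComponentIn_subset _ _ h hk
  have hVo : IsOpen (connectedComponentIn Kᶜ v) := hK.isOpen_compl.connectedComponentIn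
  refine isPreconnected_of_forall k ?_
  intro y hy
  by_cases hyK : y ∈ K
  · exact ⟨K, fun z hz h => connectedComponentIn_subset _ _ h hz, hk, hyK, hc.isPreconnected⟩
  · have hGo : IsOpen (connectedComponentIn Kᶜ y) := hK.isOpen_compl.connectedComponentIn
    have hyG : y ∈ connectedComponentIn Kᶜ y := mem_connectedComponentIn hyK
    have hdisj : Disjoint (connectedComponentIn Kᶜ y) (connectedComponentIn Kᶜ v) := by
      rw [Set.disjoint_left]
      intro z hz hz'
      apply hy
      rw [connectedComponentIn_eq hz', ← connectedComponentIn_eq hz]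
      exact hyG
    have hmeet : (closure (connectedComponentIn Kᶜ y) ∩ K).Nonempty := by
      by_contra hne
      rw [Set.not_nonempty_iff_eq_empty] at hne
      have hcl : closure (connectedComponentIn Kᶜ y) ⊆ connectedComponentIn Kᶜ y := by
        refine (isPreconnected_connectedComponentIn.closure).subset_connectedComponentIn
          (subset_closure hyG) ?_
        intro z hz hzK
        have : z ∈ closure (connectedComponentIn Kᶜ y) ∩ K := ⟨hz, hzK⟩
        rw [hne] at this
        exact this
      have hclop : IsClopen (connectedComponentIn Kᶜ y) :=
        ⟨closure_subset_iff_isClosed.1 hcl, hGo⟩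
      have := hclop.eq_univ ⟨y, hyG⟩
      exact connectedComponentIn_subset Kᶜ y (this ▸ Set.mem_univ k) hk
    obtain ⟨q, hq1, hq2⟩ := hmeet
    refine ⟨closure (connectedComponentIn Kᶜ y) ∪ K, ?_, Or.inr hk, Or.inl (subset_closure hyG),
      IsPreconnected.union q hq1 hq2 isPreconnected_connectedComponentIn.closure hc.isPreconnected⟩
    rintro z (hz | hz) h
    · exact Set.disjoint_left.1 (hdisj.closure_left hVo) hz h
    · exact connectedComponentIn_subset _ _ h hz

structure Hemi (U L : Set Ann) (M : ℝ) : Prop where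
  oU : IsOpen U
  oL : IsOpen L
  cU : IsPreconnected U
  cL : IsPreconnected L
  dj : Disjoint U L
  top : ∀ p : Ann, M < p.2 → p ∈ U
  bot : ∀ p : Ann, p.2 < -M → p ∈ L

lemma top_conn (M : ℝ) : IsPreconnected {p : Ann | M < p.2} := by
  have : {p : Ann | M < p.2} = Set.univ ×ˢ Set.Ioi M := by ext p; simp
  rw [this]
  exact isPreconnected_univ.prod isPreconnected_Ioi

lemma bot_conn (M : ℝ) : IsPreconnected {p : Ann | p.2 < M} := by
  have : {p : Ann | p.2 < M} = Set.univ ×ˢ Set.Iio M := by ext p; simp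
  rw [this]
  exact isPreconnected_univ.prod isPreconnected_Iio

lemma unbAbove_of {S : Set Ann} {M : ℝ} (h : ∀ p : Ann, M < p.2 → p ∈ S) : UnbAbove S := by
  rintro ⟨B, hB⟩
  have := hB ⟨((0 : AddCircle (1 : ℝ)), max M B + 1), h _ (by
    show M < max M B + 1
    linarith [le_max_left M B]), rfl⟩
  have h2 : max M B + 1 ≤ B := this
  linarith [le_max_right M B]

lemma unbBelow_of {S : Set Ann} {M : ℝ} (h : ∀ p : Ann, p.2 < M → p ∈ S) : UnbBelow S := by
  rintro ⟨B, hB⟩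
  have := hB ⟨((0 : AddCircle (1 : ℝ)), min M B - 1), h _ (by
    show min M B - 1 < M
    linarith [min_le_left M B]), rfl⟩
  have h2 : B ≤ min M B - 1 := this
  linarith [min_le_right M B]

lemma exists_above {S : Set Ann} (h : UnbAbove S) (M : ℝ) : ∃ p ∈ S, M < p.2 := by
  by_contra hc
  push Not at hc
  exact h ⟨M, by rintro _ ⟨p, hp, rfl⟩; exact hc p hp⟩

lemma exists_below {S : Set Ann} (h : UnbBelow S) (M : ℝ) : ∃ p ∈ S, p.2 < M := by
  by_contra hc
  push Not at hc
  exact h ⟨M, by rintro _ ⟨p, hp, rfl⟩; exact hc p hp⟩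

lemma upper_eq {K : Set Ann} {M : ℝ} (hK : ∀ p : Ann, M < p.2 → p ∉ closure K) :
    upperComp K = connectedComponentIn (closure K)ᶜ ((0 : AddCircle (1 : ℝ)), M + 1) ∧
    ∀ p : Ann, M < p.2 → p ∈ upperComp K := by
  have hT : {p : Ann | M < p.2} ⊆
      connectedComponentIn (closure K)ᶜ ((0 : AddCircle (1 : ℝ)), M + 1) :=
    (top_conn M).subset_connectedComponentIn (by show M < M + 1; linarith) hK
  have he : upperComp K = connectedComponentIn (closure K)ᶜ ((0 : AddCircle (1 : ℝ)), M + 1) := by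
    ext z
    constructor
    · rintro ⟨hz, hu⟩
      obtain ⟨q, hq, hqM⟩ := exists_above hu M
      rw [connectedComponentIn_eq (hT hqM), ← connectedComponentIn_eq hq]
      exact mem_connectedComponentIn hz
    · intro hz
      refine ⟨connectedComponentIn_subset _ _ hz, ?_⟩
      rw [← connectedComponentIn_eq hz]
      exact unbAbove_of (M := M) fun p hp => hT hp
  exact ⟨he, fun p hp => he ▸ hT hp⟩

lemma lower_eq {K : Set Ann} {M : ℝ} (hK : ∀ p : Ann, p.2 < -M → p ∉ closure K) :
    lowerComp K = connectedComponentIn (closure K)ᶜ ((0 : AddCircle (1 : ℝ)), -M - 1) ∧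
    ∀ p : Ann, p.2 < -M → p ∈ lowerComp K := by
  have hT : {p : Ann | p.2 < -M} ⊆
      connectedComponentIn (closure K)ᶜ ((0 : AddCircle (1 : ℝ)), -M - 1) :=
    (bot_conn (-M)).subset_connectedComponentIn (by show -M - 1 < -M; linarith) hK
  have he : lowerComp K = connectedComponentIn (closure K)ᶜ ((0 : AddCircle (1 : ℝ)), -M - 1) := by
    ext z
    constructor
    · rintro ⟨hz, hu⟩
      obtain ⟨q, hq, hqM⟩ := exists_below hu (-M)
      rw [connectedComponentIn_eq (hT hqM), ← connectedComponentIn_eq hq]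
      exact mem_connectedComponentIn hz
    · intro hz
      refine ⟨connectedComponentIn_subset _ _ hz, ?_⟩
      rw [← connectedComponentIn_eq hz]
      exact unbBelow_of (M := -M) fun p hp => hT hp
  exact ⟨he, fun p hp => he ▸ hT hp⟩

lemma hemi_of_ann {C : Set Ann} (hC : IsAnnularContinuum C) :
    ∃ M, Hemi (upperComp C) (lowerComp C) M ∧ (upperComp C ∪ lowerComp C)ᶜ = C := by
  obtain ⟨hcomp, -, hunb, x, y, hx, hy, hxy, -⟩ := hC
  have hcl : closure C = C := hcomp.isClosed.closure_eq
  obtain ⟨M, hM⟩ : ∃ M : ℝ, ∀ p ∈ C, |p.2| ≤ M := by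
    obtain ⟨M, hM⟩ := (hcomp.image (f := fun p : Ann => |p.2|) (by fun_prop)).bddAbove
    exact ⟨M, fun p hp => hM ⟨p, hp, rfl⟩⟩
  obtain ⟨hu, htop⟩ := upper_eq (K := C) (M := M) (by
    intro p hp h
    rw [hcl] at h
    have := hM p h
    linarith [le_abs_self p.2])
  obtain ⟨hl, hbot⟩ := lower_eq (K := C) (M := M) (by
    intro p hp h
    rw [hcl] at h
    have := hM p h
    linarith [neg_abs_le p.2])
  have hun : ∀ z ∈ Cᶜ, z ∈ upperComp C ∨ z ∈ lowerComp C := by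
    intro z hz
    have h := hunb z hz
    by_cases ha : UnbAbove (connectedComponentIn Cᶜ z)
    · left
      refine ⟨?_, ?_⟩ <;> rw [hcl] <;> assumption
    · right
      refine ⟨by rwa [hcl], ?_⟩
      rw [hcl]
      intro hb
      exact h ⟨not_not.1 ha, hb⟩
  have ho : IsOpen (closure C)ᶜ := isClosed_closure.isOpen_compl
  refine ⟨M, ⟨?_, ?_, ?_, ?_, ?_, htop, hbot⟩, ?_⟩
  · rw [hu]; exact ho.connectedComponentIn
  · rw [hl]; exact ho.connectedComponentIn
  · rw [hu]; exact isPreconnected_connectedComponentIn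
  · rw [hl]; exact isPreconnected_connectedComponentIn
  · rw [Set.disjoint_left]
    intro z hzu hzl
    rw [hu] at hzu
    rw [hl] at hzl
    have key := (connectedComponentIn_eq hzu).trans (connectedComponentIn_eq hzl).symm
    have hall : ∀ q ∈ Cᶜ, connectedComponentIn Cᶜ q =
        connectedComponentIn Cᶜ ((0 : AddCircle (1 : ℝ)), M + 1) := by
      intro q hq
      have hq' : q ∈ connectedComponentIn (closure C)ᶜ ((0 : AddCircle (1 : ℝ)), M + 1) := by
        rcases hun q hq with h | h
        · rwa [hu] at h
        · rwa [hl, ← key] at h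
      rw [hcl] at hq'
      exact (connectedComponentIn_eq hq').symm
    exact hxy ((hall x hx).trans (hall y hy).symm)
  · ext z
    constructor
    · intro hz
      by_contra hzC
      exact hz (hun z hzC)
    · rintro hz (h | h)
      · exact h.1 (subset_closure hz)
      · exact h.1 (subset_closure hz)

lemma hemi_upper {U L : Set Ann} {M : ℝ} (h : Hemi U L M) :
    Hemi (upperComp L) L M ∧ U ⊆ upperComp L ∧ IsPreconnected (upperComp L)ᶜ := by
  have hd : ∀ p ∈ U, p ∉ closure L := fun p hp hq =>
    Set.disjoint_left.1 (h.dj.closure_right h.oU) hp hq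
  obtain ⟨hu, htop⟩ := upper_eq (K := L) (M := M) fun p hp => hd p (h.top p hp)
  have hLne : L.Nonempty := ⟨((0 : AddCircle (1 : ℝ)), -M - 1), h.bot _ (by
    show -M - 1 < -M
    linarith)⟩
  refine ⟨⟨?_, h.oL, ?_, h.cL, ?_, htop, h.bot⟩, ?_, ?_⟩
  · rw [hu]; exact isClosed_closure.isOpen_compl.connectedComponentIn
  · rw [hu]; exact isPreconnected_connectedComponentIn
  · rw [Set.disjoint_left]
    intro z hz hzL
    exact hz.1 (subset_closure hzL)
  · rw [hu]
    exact h.cU.subset_connectedComponentIn (h.top _ (by show M < M + 1; linarith)) hd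
  · rw [hu]
    exact compl_conn isClosed_closure ⟨hLne.closure, h.cL.closure⟩ _

lemma hemi_lower {U L : Set Ann} {M : ℝ} (h : Hemi U L M) :
    Hemi U (lowerComp U) M ∧ L ⊆ lowerComp U ∧ IsPreconnected (lowerComp U)ᶜ := by
  have hd : ∀ p ∈ L, p ∉ closure U := fun p hp hq =>
    Set.disjoint_left.1 (h.dj.closure_left h.oL) hq hp
  obtain ⟨hl, hbot⟩ := lower_eq (K := U) (M := M) fun p hp => hd p (h.bot p hp)
  have hUne : U.Nonempty := ⟨((0 : AddCircle (1 : ℝ)), M + 1), h.top _ (by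
    show M < M + 1
    linarith)⟩
  refine ⟨⟨h.oU, ?_, h.cU, ?_, ?_, h.top, hbot⟩, ?_, ?_⟩
  · rw [hl]; exact isClosed_closure.isOpen_compl.connectedComponentIn
  · rw [hl]; exact isPreconnected_connectedComponentIn
  · rw [Set.disjoint_right]
    intro z hz hzL
    exact hz.1 (subset_closure hzL)
  · rw [hl]
    exact h.cL.subset_connectedComponentIn (h.bot _ (by show -M - 1 < -M; linarith)) hd
  · rw [hl]
    exact compl_conn isClosed_closure ⟨hUne.closure, h.cU.closure⟩ _

lemma ann_of_hemi {U L : Set Ann} {M : ℝ} (h : Hemi U L M) (hU : IsPreconnected Uᶜ)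
    (hL : IsPreconnected Lᶜ) : IsAnnularContinuum (U ∪ L)ᶜ := by
  have ht : ((0 : AddCircle (1 : ℝ)), M + 1) ∈ U := h.top _ (by show M < M + 1; linarith)
  have hb : ((0 : AddCircle (1 : ℝ)), -M - 1) ∈ L := h.bot _ (by show -M - 1 < -M; linarith)
  have hcU : ∀ z ∈ U, connectedComponentIn (U ∪ L) z = U := by
    intro z hz
    refine Set.Subset.antisymm ?_
      (h.cU.subset_connectedComponentIn hz Set.subset_union_left)
    exact isPreconnected_connectedComponentIn.subset_left_of_subset_union h.oU h.oL h.dj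
      (connectedComponentIn_subset _ _) ⟨z, mem_connectedComponentIn (Or.inl hz), hz⟩
  have hcL : ∀ z ∈ L, connectedComponentIn (U ∪ L) z = L := by
    intro z hz
    refine Set.Subset.antisymm ?_
      (h.cL.subset_connectedComponentIn hz Set.subset_union_right)
    exact isPreconnected_connectedComponentIn.subset_right_of_subset_union h.oU h.oL h.dj
      (connectedComponentIn_subset _ _) ⟨z, mem_connectedComponentIn (Or.inr hz), hz⟩
  refine ⟨?_, ⟨?_, ?_⟩, ?_, ?_⟩
  · refine IsCompact.of_isClosed_subset
      (isCompact_univ.prod (isCompact_Icc (a := -M) (b := M)))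
      (h.oU.union h.oL).isClosed_compl ?_
    intro p hp
    refine ⟨trivial, ?_, ?_⟩
    · by_contra hc
      exact hp (Or.inr (h.bot p (not_le.1 hc)))
    · by_contra hc
      exact hp (Or.inl (h.top p (not_le.1 hc)))
  · by_contra hne
    rw [Set.not_nonempty_iff_eq_empty, Set.compl_empty_iff] at hne
    have := isPreconnected_univ.subset_left_of_subset_union h.oU h.oL h.dj hne.ge
      ⟨_, trivial, ht⟩ (Set.mem_univ ((0 : AddCircle (1 : ℝ)), -M - 1))
    exact Set.disjoint_left.1 h.dj this hb
  · rw [Set.compl_union]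
    refine unico h.oU.isClosed_compl h.oL.isClosed_compl hU hL ?_ (M + 1) ?_
    · rw [← Set.compl_inter, h.dj.inter_eq, Set.compl_empty]
    · intro p hp hq
      exact hq.1 (h.top p (by rw [hp]; linarith))
  · rw [compl_compl]
    rintro z (hz | hz) hB
    · rw [hcU z hz] at hB
      exact unbAbove_of h.top hB.1
    · rw [hcL z hz] at hB
      exact unbBelow_of h.bot hB.2
  · rw [compl_compl]
    refine ⟨_, _, Or.inl ht, Or.inr hb, ?_, ?_⟩
    · rw [hcU _ ht, hcL _ hb]
      intro he
      exact Set.disjoint_left.1 h.dj ht (he ▸ ht)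
    · rintro z (hz | hz)
      · left; rw [hcU z hz, hcU _ ht]
      · right; rw [hcL z hz, hcL _ hb]

/-- **Corollary 3.3.**  An annular continuum `C` is a circloid if and only if
`(𝒰(C), ℒ(C))` is a reflexive pair of hemispheres: `𝒰(ℒ(C)) = 𝒰(C)` and
`ℒ(𝒰(C)) = ℒ(C)`. -/
theorem statement11 (C : Set Ann) (hC : IsAnnularContinuum C) :
    IsCircloidA C ↔
      (upperComp (lowerComp C) = upperComp C ∧ lowerComp (upperComp C) = lowerComp C) := by
  obtain ⟨M, hH, hCe⟩ := hemi_of_ann hC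
  constructor
  · rintro ⟨-, hmin⟩
    have fin : ∀ U' L' : Set Ann, Hemi U' L' M → IsPreconnected U'ᶜ → IsPreconnected L'ᶜ →
        upperComp C ⊆ U' → lowerComp C ⊆ L' → U' ⊆ upperComp C ∧ L' ⊆ lowerComp C := by
      intro U' L' h' cU cL sU sL
      have hE : (U' ∪ L')ᶜ = C := by
        refine hmin _ ?_ (ann_of_hemi h' cU cL)
        conv_rhs => rw [← hCe]
        exact Set.compl_subset_compl.2 (Set.union_subset_union sU sL)
      have hE2 : U' ∪ L' = upperComp C ∪ lowerComp C := by
        rw [← compl_inj_iff, hE, hCe]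
      constructor
      · intro z hz
        have : z ∈ upperComp C ∪ lowerComp C := hE2 ▸ Or.inl hz
        exact this.resolve_right fun hl => Set.disjoint_left.1 h'.dj hz (sL hl)
      · intro z hz
        have : z ∈ upperComp C ∪ lowerComp C := hE2 ▸ Or.inr hz
        exact this.resolve_left fun hl => Set.disjoint_left.1 h'.dj (sU hl) hz
    constructor
    · obtain ⟨h1, s1, c1⟩ := hemi_upper hH
      obtain ⟨h2, s2, c2⟩ := hemi_lower h1
      exact Set.Subset.antisymm (fin _ _ h2 c1 c2 s1 s2).1 s1
    · obtain ⟨h1, s1, c1⟩ := hemi_lower hH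
      obtain ⟨h2, s2, c2⟩ := hemi_upper h1
      exact Set.Subset.antisymm (fin _ _ h2 c2 c1 s2 s1).2 s1
  · rintro ⟨hu, hl⟩
    refine ⟨hC, fun E hEC hE => ?_⟩
    obtain ⟨N, hHE, hEe⟩ := hemi_of_ann hE
    have mono : closure E ⊆ closure C := closure_mono hEC
    have sU : upperComp C ⊆ upperComp E := fun z hz =>
      ⟨fun h => hz.1 (mono h), fun hb => hz.2 (hb.mono (Set.image_mono
        (connectedComponentIn_mono z (Set.compl_subset_compl.2 mono))))⟩
    have sL : lowerComp C ⊆ lowerComp E := fun z hz =>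
      ⟨fun h => hz.1 (mono h), fun hb => hz.2 (hb.mono (Set.image_mono
        (connectedComponentIn_mono z (Set.compl_subset_compl.2 mono))))⟩
    have tU : upperComp E ⊆ upperComp C := by
      rw [← hu]
      have hd : upperComp E ⊆ (closure (lowerComp C))ᶜ := fun p hp hq =>
        Set.disjoint_left.1 ((hHE.dj.mono_right sL).closure_right hHE.oU) hp hq
      intro z hz
      refine ⟨hd hz, fun hb => unbAbove_of hHE.top (hb.mono (Set.image_mono ?_))⟩
      exact hHE.cU.subset_connectedComponentIn hz hd
    have tL : lowerComp E ⊆ lowerComp C := by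
      rw [← hl]
      have hd : lowerComp E ⊆ (closure (upperComp C))ᶜ := fun p hp hq =>
        Set.disjoint_left.1 ((hHE.dj.mono_left sU).closure_left hHE.oL) hq hp
      intro z hz
      refine ⟨hd hz, fun hb => unbBelow_of hHE.bot (hb.mono (Set.image_mono ?_))⟩
      exact hHE.cL.subset_connectedComponentIn hz hd
    rw [← hCe, ← hEe, Set.Subset.antisymm sU tU, Set.Subset.antisymm sL tL]
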